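/- Let X be a T0 Alexandroff space which is either a bp-space (there exists n ∈ ℕ such that every s-path in X has fewer than n elements) or a countable fp-space (X is countable and every s-path in X is finite). Then there exists a subspace X^C ⊆ X that is a C-core and a strong deformation retract of X. -/

import Mathlib

/-- Specialization order on a topological space: `x ≤ y` iff `y ∈ closure {x}`. -/
def specLE {X : Type*} [TopologicalSpace X] (x y : X) : Prop := y ∈ closure ({x} : Set X)

/-- Comparability in the specialization order. -/
def specComp {X : Type*} [TopologicalSpace X] (x y : X) : Prop := specLE x y ∨ specLE y x

/-- `X` is an fp-space: every s-path (sequence of pairwise distinct points with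
consecutive points comparable) is finite, i.e. there is no infinite s-path. -/
def NoInfiniteSPath (X : Type*) [TopologicalSpace X] : Prop :=
  ¬ ∃ p : ℕ → X, Function.Injective p ∧ ∀ n, specComp (p n) (p (n + 1))

/-- `X` is a bp-space: there is `n : ℕ` such that every s-path in `X` (a list of pairwise
distinct points with consecutive points comparable) has fewer than `n` elements. -/
def BoundedSPaths (X : Type*) [TopologicalSpace X] : Prop :=
  ∃ n : ℕ, ∀ l : List X, l.Nodup → l.Chain' specComp → l.length < n

/-- `X` is a C-core: its only comparative retraction is the identity. -/
def IsCCore (X : Type*) [TopologicalSpace X] : Prop :=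
  ∀ r : X → X, Continuous r → r ∘ r = r → (∀ x, specComp (r x) x) → r = id

/-- `A` is a strong deformation retract of `X`. -/
def IsSDR {X : Type*} [TopologicalSpace X] (A : Set X) : Prop :=
  ∃ H : X × unitInterval → X, Continuous H ∧
    (∀ z, H (z, 0) = z) ∧ (∀ z, H (z, 1) ∈ A) ∧ ∀ a ∈ A, ∀ t, H (a, t) = a

/-!
A point `x` is a beat point of `A` in a direction (the specialization order or its dual) when `A`
has a least point `z` strictly beyond `x` in that direction; pushing `x` to `z` is then a
comparative retraction. Starting from `X`, delete all beat points in one direction, then all in the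
other, and so on transfinitely, intersecting at limit stages. What is never deleted has no beat
points and is therefore a C-core: a comparative retraction of it moving some point would have an
extremal moved point, and that one would be a beat point.

If only countably many stages delete something, they embed into the open unit interval, and the
deformation pushes each point at the time of its deletion. Every point is moved finitely often
because its successive positions form an s-path. If `X` is countable there is nothing more to
check. In a bp-space finitely many stages suffice: a point deleted at stage `n + 2` only became a
beat point after a comparable point was deleted at stage `n` or `n + 1`, so late deletions give long
s-paths.
-/

open Set Topology unitInterval

section Direction

variable {X : Type*} [TopologicalSpace X] {b : Bool} {x y z : X}

/-- The specialization order (`b = true`) or its dual (`b = false`), so that up and down beat points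
are treated at once. -/
def DirLE : Bool → X → X → Prop
  | true, x, y => x ⤳ y
  | false, x, y => y ⤳ x

/-- The strict order of `DirLE`. -/
def DirLT (b : Bool) (x y : X) : Prop := DirLE b x y ∧ x ≠ y

theorem DirLE.trans (hxy : DirLE b x y) (hyz : DirLE b y z) : DirLE b x z := by
  cases b
  · exact Specializes.trans hyz hxy
  · exact Specializes.trans hxy hyz

theorem DirLE.antisymm [T0Space X] (hxy : DirLE b x y) (hyx : DirLE b y x) : x = y := by
  cases b
  · exact (Specializes.antisymm hyx hxy).eq
  · exact (Specializes.antisymm hxy hyx).eq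

theorem dirLE_not : DirLE (!b) x y ↔ DirLE b y x := by
  cases b <;> rfl

theorem dirLE_coe {A : Set X} {x y : A} : DirLE b (x : X) y ↔ DirLE b x y := by
  cases b <;> exact (subtype_specializes_iff _ _).symm

theorem DirLE.map {Y : Type*} [TopologicalSpace Y] {f : X → Y} (h : DirLE b x y)
    (hf : Continuous f) : DirLE b (f x) (f y) := by
  cases b <;> exact Specializes.map h hf

theorem specComp_iff_dirLE (b : Bool) : specComp x y ↔ DirLE b x y ∨ DirLE b y x := by
  simp only [specComp, specLE, ← specializes_iff_mem_closure]
  cases b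
  · exact or_comm
  · rfl

theorem DirLE.specComp (h : DirLE b x y) : specComp x y :=
  (specComp_iff_dirLE b).2 (.inl h)

theorem DirLT.trans_le [T0Space X] (hxy : DirLT b x y) (hyz : DirLE b y z) : DirLT b x z :=
  ⟨hxy.1.trans hyz, by rintro rfl; exact hxy.2 (hxy.1.antisymm hyz)⟩

instance [T0Space X] : IsStrictOrder X (DirLT b) where
  irrefl _ h := h.2 rfl
  trans _ _ _ hxy hyz := hxy.trans_le hyz.1

end Direction

section SPath

variable {X : Type*} [TopologicalSpace X]

theorem BoundedSPaths.noInfiniteSPath (hX : BoundedSPaths X) : NoInfiniteSPath X := by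
  rintro ⟨p, hp, hcomp⟩
  obtain ⟨n, hn⟩ := hX
  have hchain : ((List.range n).map p).IsChain specComp := by
    rw [List.isChain_iff_getElem]
    intro i _
    simpa using hcomp i
  simpa using hn _ (List.nodup_range.map hp) hchain

theorem NoInfiniteSPath.wellFounded (hX : NoInfiniteSPath X) (r : X → X → Prop)
    [IsStrictOrder X r] : WellFounded fun y x : X ↦ r x y ∧ specComp x y := by
  rw [wellFounded_iff_isEmpty_descending_chain]
  exact ⟨fun ⟨p, hp⟩ ↦
    hX ⟨p, (RelEmbedding.natLT p fun n ↦ (hp n).1).injective, fun n ↦ (hp n).2⟩⟩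

theorem NoInfiniteSPath.wellFounded_dirLT [T0Space X] (hX : NoInfiniteSPath X) (b : Bool) :
    WellFounded fun y x : X ↦ DirLT b x y :=
  (hX.wellFounded (DirLT b)).mono fun _ _ h ↦ ⟨h, h.1.specComp⟩

end SPath

section Beat

variable {X : Type*} [TopologicalSpace X] {b : Bool} {A : Set X} {x : X}

/-- `z` is the least point of `A` strictly beyond `x` in direction `b`. The point `x` need not
belong to `A`. -/
structure IsBeatTarget (b : Bool) (A : Set X) (x z : X) : Prop where
  mem : z ∈ A
  lt : DirLT b x z
  le : ∀ {y}, y ∈ A → DirLT b x y → DirLE b z y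

/-- `x` is a beat point of `A ∪ {x}` in direction `b`: an up or down beat point in the sense of
finite spaces. -/
def IsBeatPoint (b : Bool) (A : Set X) (x : X) : Prop := ∃ z, IsBeatTarget b A x z

/-- If the target of `x` is itself a beat point, it can be replaced by its own target. -/
theorem IsBeatPoint.setOf_not_isBeatPoint [T0Space X] (hX : NoInfiniteSPath X)
    (hx : IsBeatPoint b A x) : IsBeatPoint b {y ∈ A | ¬ IsBeatPoint b A y} x := by
  induction x using (hX.wellFounded_dirLT b).induction with
  | _ x ih =>
  obtain ⟨z, hz⟩ := hx
  by_cases hbeat : IsBeatPoint b A z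
  · obtain ⟨w, hw⟩ := ih z hz.lt hbeat
    refine ⟨w, hw.mem, hz.lt.trans_le hw.lt.1, fun hy hxy ↦ hw.le hy ⟨hz.le hy.1 hxy, ?_⟩⟩
    rintro rfl
    exact hy.2 hbeat
  · exact ⟨z, ⟨hz.mem, hbeat⟩, hz.lt, fun hy ↦ hz.le hy.1⟩

theorem isCCore_of_forall_not_isBeatPoint [T0Space X] (hX : NoInfiniteSPath X)
    (hA : ∀ b, ∀ x ∈ A, ¬ IsBeatPoint b A x) : IsCCore A := by
  intro r hr _ hcomp
  by_contra hne
  obtain ⟨x, hx⟩ : ∃ x, r x ≠ x := Function.ne_iff.1 hne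
  obtain ⟨b, hb⟩ : ∃ b, DirLE b x (r x) := by
    rcases (specComp_iff_dirLE true).1 (hcomp x) with h | h
    · exact ⟨false, h⟩
    · exact ⟨true, h⟩
  have hwf : WellFounded fun y x : A ↦ DirLT b (x : X) y :=
    InvImage.wf Subtype.val (hX.wellFounded_dirLT b)
  obtain ⟨m, hm, hmax⟩ := hwf.has_min {y | DirLT b (y : X) (r y)}
    ⟨x, dirLE_coe.2 hb, fun h ↦ hx (Subtype.ext h.symm)⟩
  refine hA b m m.2 ⟨r m, (r m).2, hm, fun {y} hy hmy ↦ ?_⟩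
  lift y to A using hy
  have hrm : DirLE b (r m) (r y) := (dirLE_coe.1 hmy.1).map hr
  rw [dirLE_coe]
  rcases (specComp_iff_dirLE b).1 (hcomp y) with h | h
  · exact hrm.trans h
  · have hry : r y = y := by
      by_contra hry
      exact hmax y ⟨dirLE_coe.2 h, fun h ↦ hry (Subtype.ext h.symm)⟩ hmy
    rwa [hry] at hrm

end Beat

section IterateWhile

variable {α : Type*} {f : α → α} {R : Set α}

open Classical in
/-- Apply `f` as long as the current point lies in `R`. -/
noncomputable def iterateWhile (hwf : WellFounded fun y x ↦ x ∈ R ∧ y = f x) : α → α :=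
  hwf.fix fun x ih ↦ if hx : x ∈ R then ih (f x) ⟨hx, rfl⟩ else x

variable (hwf : WellFounded fun y x ↦ x ∈ R ∧ y = f x) {x : α}

theorem iterateWhile_of_mem (hx : x ∈ R) : iterateWhile hwf x = iterateWhile hwf (f x) := by
  rw [iterateWhile, hwf.fix_eq, dif_pos hx]

theorem iterateWhile_of_notMem (hx : x ∉ R) : iterateWhile hwf x = x := by
  rw [iterateWhile, hwf.fix_eq, dif_neg hx]

theorem iterateWhile_notMem (x : α) : iterateWhile hwf x ∉ R := by
  induction x using hwf.induction with
  | _ x ih =>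
  by_cases hx : x ∈ R
  · rw [iterateWhile_of_mem hwf hx]
    exact ih _ ⟨hx, rfl⟩
  · rwa [iterateWhile_of_notMem hwf hx]

end IterateWhile

theorem continuous_of_specializes {X Y T : Type*} [TopologicalSpace X] [AlexandrovDiscrete X]
    [TopologicalSpace Y] [TopologicalSpace T] {H : X × T → Y}
    (hX : ∀ t x y, x ⤳ y → H (x, t) ⤳ H (y, t))
    (hT : ∀ x t, ∀ᶠ s in 𝓝 t, H (x, s) ⤳ H (x, t)) : Continuous H := by
  refine continuous_def.2 fun U hU ↦ isOpen_iff_mem_nhds.2 ?_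
  rintro ⟨x, t⟩ hxt
  have hnear : ∀ᶠ y in 𝓝 x, y ⤳ x := by
    rw [← principal_nhdsKer_singleton, Filter.eventually_principal]
    exact fun y ↦ mem_nhdsKer_singleton.1
  rw [nhds_prod_eq]
  filter_upwards [hnear.prod_mk (hT x t)] with z hz
  exact ((hX _ _ _ hz.1).trans hz.2).mem_open hU hxt

section Dismantling

variable {X Λ : Type*} [TopologicalSpace X] [LinearOrder Λ] [OrderTop Λ]
  {rank : X → Λ} {dir : X → Bool} {next : X → X} {R : Set X}

/-- A scheme deleting the points of `X` in the order of their rank, those of rank `⊤` excepted: all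
points of a given rank are deleted together, each being a beat point, with target `next x`, of what
remains. The direction `dir` is a function of the point for convenience, but depends only on the
rank. -/
structure IsDismantling (rank : X → Λ) (dir : X → Bool) (next : X → X) : Prop where
  dir_eq : ∀ {x y}, rank x = rank y → dir x = dir y
  target : ∀ {x}, rank x ≠ ⊤ → IsBeatTarget (dir x) {y | rank x < rank y} x (next x)

namespace IsDismantling

theorem wellFounded_next (hd : IsDismantling rank dir next) (hX : NoInfiniteSPath X)
    (hR : ∀ x ∈ R, rank x ≠ ⊤) : WellFounded fun y x ↦ x ∈ R ∧ y = next x := by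
  refine (hX.wellFounded (rank ⁻¹'o (· < ·))).mono ?_
  rintro _ x ⟨hx, rfl⟩
  exact ⟨(hd.target (hR x hx)).mem, (hd.target (hR x hx)).lt.1.specComp⟩

theorem dirLE_iterateWhile (hd : IsDismantling rank dir next)
    (hwf : WellFounded fun y x ↦ x ∈ R ∧ y = next x) (hR : ∀ x ∈ R, rank x ≠ ⊤)
    (hlower : ∀ x ∈ R, ∀ y, rank y ≤ rank x → y ∈ R) (b : Bool) {x y : X} (hxy : DirLE b x y) :
    DirLE b (iterateWhile hwf x) (iterateWhile hwf y) := by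
  induction x, y using Sym2.GameAdd.recursion hwf generalizing b with
  | _ x y ih =>
  wlog hle : rank x ≤ rank y generalizing x y b
  · rw [← dirLE_not]
    exact this y x (fun x' y' h ↦ ih x' y' (by rwa [Sym2.eq_swap (a := x)])) (!b)
      (dirLE_not.2 hxy) (le_of_not_ge hle)
  by_cases hx : x ∈ R
  swap
  · have hy : y ∉ R := fun hy ↦ hx (hlower y hy x hle)
    rwa [iterateWhile_of_notMem hwf hx, iterateWhile_of_notMem hwf hy]
  have hnext := hd.target (hR x hx)
  have move_left : DirLE b (next x) y → DirLE b (iterateWhile hwf x) (iterateWhile hwf y) := by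
    rw [iterateWhile_of_mem hwf hx]
    exact ih _ _ (.fst ⟨hx, rfl⟩) b
  by_cases hb : dir x = b
  swap
  · obtain rfl : b = !dir x := Bool.eq_not.2 (Ne.symm hb)
    exact move_left ((dirLE_not.2 hnext.lt.1).trans hxy)
  subst hb
  rcases hle.lt_or_eq with hlt | heq
  · exact move_left (hnext.le hlt ⟨hxy, by rintro rfl; exact hlt.false⟩)
  · have hy : y ∈ R := hlower x hx y heq.ge
    rw [iterateWhile_of_mem hwf hy]
    refine ih _ _ (.snd ⟨hy, rfl⟩) _ (hxy.trans ?_)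
    rw [hd.dir_eq heq]
    exact (hd.target (hR y hy)).lt.1

theorem comp {M : Type*} [LinearOrder M] [OrderTop M] (hd : IsDismantling rank dir next)
    {φ : Λ → M} (hφ : StrictMonoOn φ (range rank)) (htop : ∀ x, rank x = ⊤ → φ (rank x) = ⊤) :
    IsDismantling (φ ∘ rank) dir next where
  dir_eq h := hd.dir_eq (hφ.injOn (mem_range_self _) (mem_range_self _) h)
  target {x} hx := by
    have hset : {y | (φ ∘ rank) x < (φ ∘ rank) y} = {y | rank x < rank y} := by
      ext y
      exact hφ.lt_iff_lt (mem_range_self x) (mem_range_self y)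
    rw [hset]
    exact hd.target fun h ↦ hx (htop x h)

end IsDismantling

end Dismantling

section Flow

variable {X : Type*} {time : X → I} {dir : X → Bool} {x : X} {t : I}

/-- The points that a dismantling in real time has moved by time `t`. A point `x` deleted exactly at
time `t` counts as moved if `x ⤳ next x` and as not yet moved if `next x ⤳ x`; this makes its
trajectory continuous at `t`. -/
def movedBy (time : X → I) (dir : X → Bool) (t : I) : Set X :=
  {x | time x ≠ ⊤ ∧ (time x < t ∨ time x = t ∧ dir x = true)}

theorem mem_movedBy_of_lt (h : time x < t) : x ∈ movedBy time dir t :=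
  ⟨h.ne_top, .inl h⟩

theorem notMem_movedBy_of_lt (h : t < time x) : x ∉ movedBy time dir t :=
  fun hx ↦ hx.2.elim h.not_gt fun hx ↦ h.ne' hx.1

variable [TopologicalSpace X] {next : X → X}

namespace IsDismantling

theorem wellFounded_movedBy (hd : IsDismantling time dir next) (hX : NoInfiniteSPath X) (t : I) :
    WellFounded fun y x ↦ x ∈ movedBy time dir t ∧ y = next x :=
  hd.wellFounded_next hX fun _ ↦ And.left

/-- The position at time `t` of the point starting at `x`. -/
noncomputable def flow (hd : IsDismantling time dir next) (hX : NoInfiniteSPath X) (t : I) :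
    X → X :=
  iterateWhile (hd.wellFounded_movedBy hX t)

variable (hd : IsDismantling time dir next) (hX : NoInfiniteSPath X)

theorem flow_of_mem (hx : x ∈ movedBy time dir t) : hd.flow hX t x = hd.flow hX t (next x) :=
  iterateWhile_of_mem _ hx

theorem flow_of_notMem (hx : x ∉ movedBy time dir t) : hd.flow hX t x = x :=
  iterateWhile_of_notMem _ hx

theorem flow_specializes (t : I) {y : X} (hxy : x ⤳ y) : hd.flow hX t x ⤳ hd.flow hX t y := by
  refine hd.dirLE_iterateWhile _ (fun _ ↦ And.left) ?_ true hxy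
  rintro x ⟨hx, hxt⟩ y hyx
  rcases hyx.lt_or_eq with hlt | heq
  · exact mem_movedBy_of_lt (hlt.trans_le (hxt.elim le_of_lt fun h ↦ h.1.le))
  · refine ⟨heq ▸ hx, ?_⟩
    rwa [heq, hd.dir_eq heq]

theorem eventually_flow_specializes_of_eq (hx : time x ≠ ⊤) :
    ∀ᶠ s in 𝓝 (time x), hd.flow hX s x ⤳ hd.flow hX (time x) x := by
  have hnext := hd.target hx
  have flow_next {s : I} (hs : s < time (next x)) : hd.flow hX s (next x) = next x :=
    hd.flow_of_notMem hX (notMem_movedBy_of_lt hs)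
  filter_upwards [gt_mem_nhds hnext.mem] with s hs
  have flow_s : hd.flow hX s x = x ∨ hd.flow hX s x = next x := by
    by_cases hxs : x ∈ movedBy time dir s
    · exact .inr ((hd.flow_of_mem hX hxs).trans (flow_next hs))
    · exact .inl (hd.flow_of_notMem hX hxs)
  have hlt := hnext.lt.1
  cases hb : dir x <;> rw [hb] at hlt
  · have hmoved : x ∉ movedBy time dir (time x) := fun h ↦ by simp [movedBy, hb] at h
    rw [hd.flow_of_notMem hX hmoved]
    rcases flow_s with h | h <;> rw [h]
    exact hlt
  · rw [hd.flow_of_mem hX ⟨hx, .inr ⟨rfl, hb⟩⟩, flow_next hnext.mem]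
    rcases flow_s with h | h <;> rw [h]
    exact hlt

theorem eventually_flow_specializes (x : X) (t : I) :
    ∀ᶠ s in 𝓝 t, hd.flow hX s x ⤳ hd.flow hX t x := by
  induction x using (hd.wellFounded_next (R := {x | time x ≠ ⊤}) hX fun _ ↦ id).induction with
  | _ x ih =>
  by_cases hx : time x = ⊤
  · have hconst (s : I) : hd.flow hX s x = x := hd.flow_of_notMem hX fun h ↦ h.1 hx
    simp only [hconst, specializes_rfl, Filter.eventually_true]
  rcases lt_trichotomy (time x) t with hlt | rfl | hgt
  · filter_upwards [lt_mem_nhds hlt, ih _ ⟨hx, rfl⟩] with s hs hnext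
    rwa [hd.flow_of_mem hX (mem_movedBy_of_lt hs), hd.flow_of_mem hX (mem_movedBy_of_lt hlt)]
  · exact hd.eventually_flow_specializes_of_eq hX hx
  · filter_upwards [gt_mem_nhds hgt] with s hs
    rw [hd.flow_of_notMem hX (notMem_movedBy_of_lt hs),
      hd.flow_of_notMem hX (notMem_movedBy_of_lt hgt)]

end IsDismantling

theorem IsDismantling.isSDR_of_pos [AlexandrovDiscrete X]
    (hd : IsDismantling time dir next) (hX : NoInfiniteSPath X) (hpos : ∀ x, 0 < time x) :
    IsSDR {x | time x = ⊤} := by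
  refine ⟨fun z ↦ hd.flow hX z.2 z.1, ?_, fun x ↦ ?_, fun x ↦ ?_, fun x hx t ↦ ?_⟩
  · exact continuous_of_specializes (fun t _ _ ↦ hd.flow_specializes hX t)
      (hd.eventually_flow_specializes hX)
  · exact hd.flow_of_notMem hX (notMem_movedBy_of_lt (hpos x))
  · by_contra hne
    exact iterateWhile_notMem (hd.wellFounded_movedBy hX 1) x
      (mem_movedBy_of_lt (lt_top_iff_ne_top.2 hne))
  · exact hd.flow_of_notMem hX fun h ↦ h.1 hx

theorem exists_strictMonoOn_unitInterval {Λ : Type*} [LinearOrder Λ] [OrderTop Λ] {S : Set Λ}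
    (hS : S.Countable) :
    ∃ φ : Λ → I, StrictMonoOn φ S ∧ (∀ l, 0 < φ l) ∧ ∀ l ∈ S, φ l = ⊤ ↔ l = ⊤ := by
  classical
  have := hS.to_subtype
  have : Nontrivial (Ioo (0 : I) 1) := (Ioo_infinite zero_lt_one).nontrivial.coe_sort
  obtain ⟨ι⟩ := Order.embedding_from_countable_to_dense S (Ioo (0 : I) 1)
  let φ (l : Λ) : I := if h : l ∈ S ∧ l ≠ ⊤ then ι ⟨l, h.1⟩ else ⊤
  have φ_of_ne {l : Λ} (hl : l ∈ S) (hl' : l ≠ ⊤) : φ l = ι ⟨l, hl⟩ := dif_pos ⟨hl, hl'⟩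
  have φ_top : φ ⊤ = ⊤ := dif_neg fun h ↦ h.2 rfl
  have φ_lt {l : Λ} (hl : l ∈ S) (hl' : l ≠ ⊤) : φ l < ⊤ := by
    rw [φ_of_ne hl hl']
    exact (ι _).2.2
  refine ⟨φ, fun k hk l hl hkl ↦ ?_, fun l ↦ ?_, fun l hl ↦ ?_⟩
  · rcases eq_or_ne l ⊤ with rfl | hl'
    · rw [φ_top]
      exact φ_lt hk hkl.ne
    · rw [φ_of_ne hk hkl.ne_top, φ_of_ne hl hl', Subtype.coe_lt_coe, ι.lt_iff_lt]
      exact hkl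
  · by_cases h : l ∈ S ∧ l ≠ ⊤
    · rw [φ_of_ne h.1 h.2]
      exact (ι _).2.1
    · rw [show φ l = ⊤ from dif_neg h]
      exact zero_lt_one
  · exact ⟨fun h ↦ by_contra fun hl' ↦ (φ_lt hl hl').ne h, fun h ↦ h ▸ φ_top⟩

theorem IsDismantling.isSDR [AlexandrovDiscrete X] {Λ : Type*} [LinearOrder Λ] [OrderTop Λ]
    {rank : X → Λ} (hd : IsDismantling rank dir next) (hX : NoInfiniteSPath X)
    (hrank : (range rank).Countable) : IsSDR {x | rank x = ⊤} := by
  obtain ⟨φ, hmono, hpos, htop⟩ := exists_strictMonoOn_unitInterval hrank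
  have htop' (x : X) : φ (rank x) = ⊤ ↔ rank x = ⊤ := htop _ (mem_range_self x)
  simpa only [Function.comp_apply, htop'] using
    (hd.comp hmono fun x ↦ (htop' x).2).isSDR_of_pos hX fun x ↦ hpos (rank x)

end Flow

section Stage

variable {X J : Type*} [TopologicalSpace X]

/-- What is left of `X` before stage `j`, when stage `i` deletes all beat points in direction
`dir i`. -/
def stage [LinearOrder J] [WellFoundedLT J] (dir : J → Bool) (j : J) : Set X :=
  {x | ∀ i < j, ¬ IsBeatPoint (dir i) (stage dir i) x}
termination_by (wellFounded_lt (α := J)).wrap j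

theorem mem_stage [LinearOrder J] [WellFoundedLT J] {dir : J → Bool} {x : X} {j : J} :
    x ∈ stage dir j ↔ ∀ i < j, ¬ IsBeatPoint (dir i) (stage dir i) x := by
  rw [stage, mem_ofPred_eq]

variable [ConditionallyCompleteLinearOrderBot J] [WellFoundedLT J] {dir : J → Bool} {x : X}
  {i j : J}

/-- The stage deleting `x`, or `⊤` if `x` is never deleted. -/
noncomputable def stageRank (dir : J → Bool) (x : X) : WithTop J :=
  sInf ((↑) '' {j | IsBeatPoint (dir j) (stage dir j) x})

theorem coe_le_stageRank : ↑j ≤ stageRank dir x ↔ x ∈ stage dir j := by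
  rw [stageRank, le_sInf_iff, forall_mem_image, mem_stage]
  simp only [mem_ofPred_eq, WithTop.coe_le_coe]
  exact forall_congr' fun i ↦ by rw [← not_lt, imp_not_comm]

theorem isBeatPoint_of_stageRank_eq (hx : stageRank dir x = j) :
    IsBeatPoint (dir j) (stage dir j) x := by
  set S : Set (WithTop J) := (↑) '' {j | IsBeatPoint (dir j) (stage dir j) x}
  have hS : S.Nonempty := by
    by_contra hS
    simp [stageRank, S, not_nonempty_iff_eq_empty.1 hS] at hx
  obtain ⟨i, hi, hix⟩ := csInf_mem hS
  obtain rfl : i = j := WithTop.coe_injective (hix.trans hx)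
  exact hi

theorem coe_lt_stageRank :
    ↑j < stageRank dir x ↔ x ∈ stage dir j ∧ ¬ IsBeatPoint (dir j) (stage dir j) x := by
  rw [← coe_le_stageRank]
  refine ⟨fun h ↦ ⟨h.le, fun hx ↦ h.not_ge (sInf_le ⟨j, hx, rfl⟩)⟩, fun ⟨hle, hx⟩ ↦ ?_⟩
  exact hle.lt_of_ne fun h ↦ hx (isBeatPoint_of_stageRank_eq h.symm)

theorem exists_isDismantling_stageRank [T0Space X] (hX : NoInfiniteSPath X) (dir : J → Bool) :
    ∃ (dir' : X → Bool) (next : X → X), IsDismantling (stageRank dir) dir' next := by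
  let dir' (x : X) : Bool := dir ((stageRank dir x).untopD ⊥)
  have hbeat (x : X) (hx : stageRank dir x ≠ ⊤) :
      IsBeatPoint (dir' x) {y | stageRank dir x < stageRank dir y} x := by
    obtain ⟨j, hj⟩ := WithTop.ne_top_iff_exists.1 hx
    simp only [dir', ← hj, WithTop.untopD_coe, coe_lt_stageRank]
    exact (isBeatPoint_of_stageRank_eq hj.symm).setOf_not_isBeatPoint hX
  have hnext (x : X) : ∃ z, stageRank dir x ≠ ⊤ →
      IsBeatTarget (dir' x) {y | stageRank dir x < stageRank dir y} x z := by
    by_cases hx : stageRank dir x = ⊤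
    · exact ⟨x, fun h ↦ absurd hx h⟩
    · exact (hbeat x hx).imp fun _ hz _ ↦ hz
  choose next hnext using hnext
  exact ⟨dir', next, fun h ↦ by simp only [dir', h], hnext _⟩

theorem not_isBeatPoint_setOf_stageRank_eq_top
    (hbdd : ∃ j : J, ∀ x : X, stageRank dir x ≠ ⊤ → stageRank dir x < j)
    (hdir : ∀ j b, ∃ i ≥ j, dir i = b) (b : Bool) (hx : stageRank dir x = ⊤) :
    ¬ IsBeatPoint b {x : X | stageRank dir x = ⊤} x := by
  obtain ⟨j, hj⟩ := hbdd
  obtain ⟨i, hij, rfl⟩ := hdir j b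
  have hstage : stage dir i = {x : X | stageRank dir x = ⊤} := by
    ext y
    rw [← coe_le_stageRank, mem_ofPred_eq]
    refine ⟨fun hy ↦ ?_, fun hy ↦ hy ▸ le_top⟩
    by_contra hne
    exact (hj y hne).not_ge ((WithTop.coe_le_coe.2 hij).trans hy)
  rw [← hstage]
  exact (coe_lt_stageRank.1 (hx ▸ WithTop.coe_lt_top i)).2

theorem exists_isCCore_isSDR_of_stageRank [AlexandrovDiscrete X] [T0Space X]
    (hX : NoInfiniteSPath X) (hcount : (range (stageRank (X := X) dir)).Countable)
    (hbdd : ∃ j : J, ∀ x : X, stageRank dir x ≠ ⊤ → stageRank dir x < j)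
    (hdir : ∀ j b, ∃ i ≥ j, dir i = b) :
    ∃ XC : Set X, IsCCore XC ∧ IsSDR XC := by
  obtain ⟨_, _, hd⟩ := exists_isDismantling_stageRank hX dir
  exact ⟨{x | stageRank dir x = ⊤},
    isCCore_of_forall_not_isBeatPoint hX fun b _ ↦
      not_isBeatPoint_setOf_stageRank_eq_top hbdd hdir b,
    hd.isSDR hX hcount⟩

/-- The target of `x` at stage `j` was present at stage `i`; as `x` was no beat point then, the
target was not yet least, and what had to be deleted in between is comparable to `x`. -/
theorem exists_specComp_stageRank_lt (hij : i < j) (hdir : dir i = dir j)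
    (hx : stageRank dir x = j) :
    ∃ y : X, specComp x y ∧ i ≤ stageRank dir y ∧ stageRank dir y < j := by
  obtain ⟨z, hz⟩ := isBeatPoint_of_stageRank_eq hx
  have hzi : z ∈ stage dir i := mem_stage.2 fun k hk ↦ mem_stage.1 hz.mem k (hk.trans hij)
  have hxi : ¬ IsBeatPoint (dir j) (stage dir i) x :=
    hdir ▸ (coe_lt_stageRank.1 (hx ▸ WithTop.coe_lt_coe.2 hij)).2
  obtain ⟨y, hyi, hxy, hzy⟩ : ∃ y ∈ stage dir i, DirLT (dir j) x y ∧ ¬ DirLE (dir j) z y := by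
    by_contra! h
    exact hxi ⟨z, hzi, hz.lt, h _⟩
  refine ⟨y, hxy.1.specComp, coe_le_stageRank.2 hyi, lt_of_not_ge fun hy ↦ ?_⟩
  exact hzy (hz.le (coe_le_stageRank.1 hy) hxy)

theorem exists_isChain_stageRank {dir : ℕ → Bool} (hdir : ∀ n, dir (n + 2) = dir n) (k : ℕ) {m : ℕ}
    (hkm : 2 * k ≤ m) (hx : stageRank dir x = m) :
    ∃ l : List X, l.length = k ∧
      (x :: l).IsChain fun y z ↦ specComp y z ∧ stageRank dir z < stageRank dir y := by
  induction k generalizing x m with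
  | zero => exact ⟨[], rfl, .singleton x⟩
  | succ k ih =>
    obtain ⟨j, rfl⟩ : ∃ j, m = j + 2 := ⟨m - 2, by omega⟩
    obtain ⟨y, hxy, hjy, hyx⟩ :=
      exists_specComp_stageRank_lt (Nat.lt_add_of_pos_right two_pos) (hdir j).symm hx
    obtain ⟨i, hi⟩ := WithTop.ne_top_iff_exists.1 hyx.ne_top
    have hji : j ≤ i := WithTop.coe_le_coe.1 (hi ▸ hjy)
    obtain ⟨l, rfl, hl⟩ := ih (by omega) hi.symm
    exact ⟨y :: l, rfl, List.isChain_cons_cons.2 ⟨⟨hxy, hx ▸ hyx⟩, hl⟩⟩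

theorem BoundedSPaths.exists_stageRank_lt (hX : BoundedSPaths X) {dir : ℕ → Bool}
    (hdir : ∀ n, dir (n + 2) = dir n) :
    ∃ j : ℕ, ∀ x : X, stageRank dir x ≠ ⊤ → stageRank dir x < j := by
  obtain ⟨n, hn⟩ := hX
  refine ⟨2 * n, fun x hx ↦ ?_⟩
  obtain ⟨m, hm⟩ := WithTop.ne_top_iff_exists.1 hx
  by_contra hge
  rw [← hm, not_lt] at hge
  obtain ⟨l, rfl, hl⟩ := exists_isChain_stageRank hdir n (WithTop.coe_le_coe.1 hge) hm.symm
  have hdesc : (x :: l).Pairwise fun y z ↦ stageRank dir z < stageRank dir y :=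
    (hl.imp fun _ _ ↦ And.right).pairwise
  have hnodup : (x :: l).Nodup := hdesc.imp fun h ↦ by rintro rfl; exact h.false
  have hlen := hn (x :: l) hnodup (hl.imp fun _ _ ↦ And.left)
  simp at hlen

end Stage

theorem BoundedSPaths.exists_isCCore_isSDR {X : Type*} [TopologicalSpace X]
    [AlexandrovDiscrete X] [T0Space X] (hX : BoundedSPaths X) :
    ∃ XC : Set X, IsCCore XC ∧ IsSDR XC := by
  have hcofinal (j : ℕ) : ∀ b, ∃ i ≥ j, i.bodd = b
    | false => ⟨2 * j, by omega, by simp⟩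
    | true => ⟨2 * j + 1, by omega, by simp⟩
  exact exists_isCCore_isSDR_of_stageRank hX.noInfiniteSPath (to_countable _)
    (hX.exists_stageRank_lt fun n ↦ by simp) hcofinal

theorem NoInfiniteSPath.exists_isCCore_isSDR.{u} {X : Type u} [TopologicalSpace X]
    [AlexandrovDiscrete X] [T0Space X] [Countable X] (hX : NoInfiniteSPath X) :
    ∃ XC : Set X, IsCCore XC ∧ IsSDR XC := by
  let dir (α : Ordinal.{u}) : Bool := decide (α % 2 = 1)
  have hcofinal (α : Ordinal.{u}) : ∀ b, ∃ β ≥ α, dir β = b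
    | false => ⟨2 * α, Ordinal.le_mul_right α two_pos, by simp [dir]⟩
    | true => by
      refine ⟨2 * α + 1, (Ordinal.le_mul_right α two_pos).trans le_self_add, ?_⟩
      simp [dir, Ordinal.mul_add_mod_self, Ordinal.mod_eq_of_lt]
  have hbdd : ∃ α : Ordinal.{u}, ∀ x : X, stageRank dir x ≠ ⊤ → stageRank dir x < α := by
    refine ⟨⨆ x : X, ((stageRank dir x).untopD 0 + 1), fun x hx ↦ ?_⟩
    have hlt := Ordinal.lt_iSup_add_one (fun x : X ↦ (stageRank dir x).untopD 0) x
    obtain ⟨β, hβ⟩ := WithTop.ne_top_iff_exists.1 hx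
    rw [← hβ, WithTop.coe_lt_coe]
    simpa only [← hβ, WithTop.untopD_coe] using hlt
  exact exists_isCCore_isSDR_of_stageRank hX (countable_range _) hbdd hcofinal

/-- Every T0 Alexandroff bp-space, and every countable T0 Alexandroff fp-space, has a
C-core as its strong deformation retract. -/
theorem stmt19 {X : Type*} [TopologicalSpace X] [AlexandrovDiscrete X] [T0Space X]
    (h : BoundedSPaths X ∨ (Countable X ∧ NoInfiniteSPath X)) :
    ∃ XC : Set X, IsCCore ↥XC ∧ IsSDR XC :=
  h.elim BoundedSPaths.exists_isCCore_isSDR fun ⟨_, hX⟩ ↦ hX.exists_isCCore_isSDR
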